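/- Let p ∈ (0,1/2], r ∈ ℕ with r ≥ 1, and δ > 0. Suppose f : {0,1}^n → {0,1} is a monotone (r,δ)-global Boolean function. Then I_S(f) ≤ 8^r·δ for every nonempty S ⊆ [n] with |S| ≤ r. -/

import Mathlib

open Finset

namespace GlobalHC

variable {n : ℕ}

/-- Expectation with respect to the `p`-biased measure on `{0,1}^n`. -/
noncomputable def Ep (p : ℝ) (f : (Fin n → Bool) → ℝ) : ℝ :=
  ∑ x : Fin n → Bool, (∏ i, if x i then p else 1 - p) * f x

/-- The `r`-norm with respect to the `p`-biased measure. -/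
noncomputable def pnorm (p r : ℝ) (f : (Fin n → Bool) → ℝ) : ℝ :=
  (Ep p fun x => |f x| ^ r) ^ (1 / r)

/-- The `p`-biased character `χ_S`. -/
noncomputable def chi (p : ℝ) (S : Finset (Fin n)) (x : Fin n → Bool) : ℝ :=
  ∏ i ∈ S, ((if x i then (1 : ℝ) else 0) - p) / Real.sqrt (p * (1 - p))

/-- The `p`-biased Fourier coefficient `f̂(S)`. -/
noncomputable def coeff (p : ℝ) (f : (Fin n → Bool) → ℝ) (S : Finset (Fin n)) : ℝ :=
  Ep p fun x => f x * chi p S x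

/-- The derivative `D_S f = Σ_{T ⊇ S} f̂(T) χ_{T∖S}`. -/
noncomputable def derivS (p : ℝ) (S : Finset (Fin n)) (f : (Fin n → Bool) → ℝ) :
    (Fin n → Bool) → ℝ :=
  fun x => ∑ T ∈ Finset.univ.filter (fun T => S ⊆ T), coeff p f T * chi p (T \ S) x

/-- The generalised influence `I_S(f) = σ^{-2|S|} Σ_{T ⊇ S} f̂(T)²`. -/
noncomputable def genInf (p : ℝ) (S : Finset (Fin n)) (f : (Fin n → Bool) → ℝ) : ℝ :=
  (∑ T ∈ Finset.univ.filter (fun T => S ⊆ T), coeff p f T ^ 2) / (p * (1 - p)) ^ S.card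

/-- The noise operator `T_ρ f = Σ_S ρ^{|S|} f̂(S) χ_S`. -/
noncomputable def noise (p ρ : ℝ) (f : (Fin n → Bool) → ℝ) : (Fin n → Bool) → ℝ :=
  fun x => ∑ S : Finset (Fin n), ρ ^ S.card * coeff p f S * chi p S x

/-- The degree-`r` truncation `f^{≤ r}`. -/
noncomputable def trunc (p : ℝ) (r : ℕ) (f : (Fin n → Bool) → ℝ) : (Fin n → Bool) → ℝ :=
  fun x => ∑ S ∈ Finset.univ.filter (fun S : Finset (Fin n) => S.card ≤ r),
    coeff p f S * chi p S x

/-- The restriction `f_{J→1}` setting all coordinates in `J` to `1`. -/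
def restrict1 (J : Finset (Fin n)) (f : (Fin n → Bool) → ℝ) : (Fin n → Bool) → ℝ :=
  fun x => f (fun i => if i ∈ J then true else x i)

/-- `f` is `(r,δ)`-global (for the `p`-biased measure). -/
def IsGlobal (p r δ : ℝ) (f : (Fin n → Bool) → ℝ) : Prop :=
  ∀ J : Finset (Fin n), (J.card : ℝ) ≤ r → Ep p (restrict1 J f) ≤ Ep p f + δ

/-- The total influence `I[f] = Σ_i Pr_{μ_p}[f(x ⊕ e_i) ≠ f(x)]`. -/
noncomputable def totalInf (p : ℝ) (f : (Fin n → Bool) → ℝ) : ℝ :=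
  ∑ i : Fin n, Ep p fun x => if f (Function.update x i (!x i)) = f x then 0 else 1

/-- Noise stability `Stab_ρ(f) = Σ_S ρ^{|S|} f̂(S)²` (w.r.t. `μ_p`). -/
noncomputable def stab (p ρ : ℝ) (f : (Fin n → Bool) → ℝ) : ℝ :=
  ∑ S : Finset (Fin n), ρ ^ S.card * coeff p f S ^ 2

/-- `f` is monotone. -/
def Mono (f : (Fin n → Bool) → ℝ) : Prop :=
  ∀ x y : Fin n → Bool, (∀ i, x i ≤ y i) → f x ≤ f y

/-! Averaging `f χ_S` over the coordinates in `S` alone gives a function of the other coordinates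
whose Fourier coefficient at `T ∖ S` is `f̂(T)` for every `T ⊇ S`, so by Parseval its second moment
dominates `σ^{2|S|} I_S(f)`. As `χ_S` has mean zero, one may subtract `f_{S→0}` from `f` in that
average; for monotone `f` this leaves at most `𝔼|χ_S| = (2σ)^{|S|}` times `h = f_{S→1} - f_{S→0}`.
Since `h² ≤ h`, this gives `I_S(f) ≤ 4^{|S|} 𝔼 h`. Finally, `f_{S→1} - f ≥ 0` equals `h` on the
event that all coordinates in `S` are `0`, which has probability `(1 - p)^{|S|}` and is independent
of `h`, so globalness bounds `(1 - p)^{|S|} 𝔼 h` by `δ`. -/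

section Expectation

variable {p : ℝ}

/-- The probability `μ_p({x})` of the point `x`. -/
noncomputable def weight (p : ℝ) (x : Fin n → Bool) : ℝ :=
  ∏ i, if x i then p else 1 - p

theorem Ep_eq_sum_weight_mul (f : (Fin n → Bool) → ℝ) : Ep p f = ∑ x, weight p x * f x :=
  rfl

theorem Ep_sub (f g : (Fin n → Bool) → ℝ) :
    Ep p (fun x => f x - g x) = Ep p f - Ep p g := by
  simp only [Ep, mul_sub, sum_sub_distrib]

theorem Ep_const_mul (c : ℝ) (f : (Fin n → Bool) → ℝ) :
    Ep p (fun x => c * f x) = c * Ep p f := by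
  simp only [Ep, mul_sum, mul_left_comm]

theorem Ep_mul_const (f : (Fin n → Bool) → ℝ) (c : ℝ) :
    Ep p (fun x => f x * c) = Ep p f * c := by
  simp only [mul_comm _ c, Ep_const_mul]

theorem Ep_sum {ι : Type*} (A : Finset ι) (f : ι → (Fin n → Bool) → ℝ) :
    Ep p (fun x => ∑ a ∈ A, f a x) = ∑ a ∈ A, Ep p (f a) := by
  simp only [Ep, mul_sum]
  exact sum_comm

theorem weight_nonneg (hp0 : 0 ≤ p) (hp1 : p ≤ 1) (x : Fin n → Bool) : 0 ≤ weight p x :=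
  prod_nonneg fun i _ => by split_ifs <;> linarith

theorem Ep_mono (hp0 : 0 ≤ p) (hp1 : p ≤ 1) {f g : (Fin n → Bool) → ℝ}
    (hfg : ∀ x, f x ≤ g x) : Ep p f ≤ Ep p g :=
  sum_le_sum fun x _ => mul_le_mul_of_nonneg_left (hfg x) (weight_nonneg hp0 hp1 x)

theorem abs_Ep_le (hp0 : 0 ≤ p) (hp1 : p ≤ 1) (f : (Fin n → Bool) → ℝ) :
    |Ep p f| ≤ Ep p fun x => |f x| := by
  simp only [Ep_eq_sum_weight_mul]
  refine (abs_sum_le_sum_abs _ _).trans_eq (sum_congr rfl fun x _ => ?_)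
  rw [abs_mul, abs_of_nonneg (weight_nonneg hp0 hp1 x)]

theorem Ep_prod (S : Finset (Fin n)) (φ : Fin n → Bool → ℝ) :
    Ep p (fun x => ∏ i ∈ S, φ i (x i)) = ∏ i ∈ S, (p * φ i true + (1 - p) * φ i false) := by
  have hfactor (x : Fin n → Bool) :
      weight p x * ∏ i ∈ S, φ i (x i) =
        ∏ i, (if x i then p else 1 - p) * if i ∈ S then φ i (x i) else 1 := by
    rw [weight, prod_mul_distrib, prod_ite_mem, univ_inter]
  have hcoord (i : Fin n) :
      ∑ b : Bool, (if b then p else 1 - p) * (if i ∈ S then φ i b else 1) =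
        if i ∈ S then p * φ i true + (1 - p) * φ i false else 1 := by
    by_cases hi : i ∈ S <;> simp [hi]
  simp only [Ep_eq_sum_weight_mul, hfactor]
  rw [← Fintype.prod_sum fun i (b : Bool) =>
    (if b then p else 1 - p) * if i ∈ S then φ i b else 1]
  simp only [hcoord, prod_ite_mem, univ_inter]

theorem Ep_const (c : ℝ) : Ep p (fun _ : Fin n → Bool => c) = c := by
  have hone : Ep p (fun _ : Fin n → Bool => 1) = 1 := Ep_prod ∅ fun _ _ => 1
  calc Ep p (fun _ : Fin n → Bool => c) = Ep p (fun _ : Fin n → Bool => c * 1) := by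
        simp only [mul_one]
    _ = c := by rw [Ep_const_mul, hone, mul_one]

theorem Ep_Ep_piecewise (S : Finset (Fin n)) (f : (Fin n → Bool) → ℝ) :
    Ep p (fun x => Ep p fun y => f (S.piecewise y x)) = Ep p f := by
  -- Exchanging the coordinates in `S` between two independent samples preserves their joint law.
  let swap (z : (Fin n → Bool) × (Fin n → Bool)) : (Fin n → Bool) × (Fin n → Bool) :=
    (S.piecewise z.2 z.1, S.piecewise z.1 z.2)
  have hswap : Function.Involutive swap := fun z => by
    ext i <;> by_cases hi : i ∈ S <;> simp [swap, hi]
  have hweight (z) : weight p (swap z).1 * weight p (swap z).2 = weight p z.1 * weight p z.2 := by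
    simp only [weight, swap, ← prod_mul_distrib]
    refine prod_congr rfl fun i _ => ?_
    by_cases hi : i ∈ S <;> simp [hi, mul_comm]
  calc Ep p (fun x => Ep p fun y => f (S.piecewise y x))
      = ∑ z, weight p z.1 * weight p z.2 * f (swap z).1 := by
        simp only [Ep_eq_sum_weight_mul, mul_sum, Fintype.sum_prod_type, swap, mul_assoc]
    _ = ∑ z, weight p (swap z).1 * weight p (swap z).2 * f (swap z).1 := by simp only [hweight]
    _ = ∑ z : (Fin n → Bool) × (Fin n → Bool), weight p z.1 * weight p z.2 * f z.1 :=
        hswap.bijective.sum_comp fun z => weight p z.1 * weight p z.2 * f z.1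
    _ = Ep p (fun x => Ep p fun _ : Fin n → Bool => f x) := by
        simp only [Ep_eq_sum_weight_mul, mul_sum, Fintype.sum_prod_type, mul_assoc]
    _ = Ep p f := by simp only [Ep_const]

end Expectation

section Fourier

variable {p : ℝ}

theorem Ep_chi {S : Finset (Fin n)} (hS : S.Nonempty) : Ep p (chi p S) = 0 := by
  obtain ⟨i, hi⟩ := hS
  refine (Ep_prod S fun _ b => ((if b then 1 else 0) - p) / √(p * (1 - p))).trans
    (prod_eq_zero hi ?_)
  simp only [if_true, Bool.false_eq_true, if_false]
  ring

theorem Ep_abs_chi (hp0 : 0 ≤ p) (hp1 : p ≤ 1) (S : Finset (Fin n)) :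
    (Ep p fun x => |chi p S x|) = (2 * √(p * (1 - p))) ^ S.card := by
  have hcoord : p * |(1 - p) / √(p * (1 - p))| + (1 - p) * |(0 - p) / √(p * (1 - p))| =
      2 * √(p * (1 - p)) := by
    rw [abs_div, abs_div, abs_of_nonneg (sub_nonneg.2 hp1), zero_sub, abs_neg, abs_of_nonneg hp0,
      abs_of_nonneg (Real.sqrt_nonneg _)]
    calc p * ((1 - p) / √(p * (1 - p))) + (1 - p) * (p / √(p * (1 - p)))
        = 2 * (p * (1 - p) / √(p * (1 - p))) := by ring
      _ = 2 * √(p * (1 - p)) := by rw [Real.div_sqrt]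
  simp only [chi, abs_prod]
  rw [Ep_prod S fun _ b => |((if b then 1 else 0) - p) / √(p * (1 - p))|]
  simp only [if_true, Bool.false_eq_true, if_false, hcoord, prod_const]

theorem chi_piecewise {S T : Finset (Fin n)} (hST : S ⊆ T) (x y : Fin n → Bool) :
    chi p T (S.piecewise y x) = chi p S y * chi p (T \ S) x := by
  unfold chi
  rw [← prod_sdiff hST, mul_comm]
  congr 1
  · exact prod_congr rfl fun i hi => by rw [piecewise_eq_of_mem _ _ _ hi]
  · exact prod_congr rfl fun i hi => by rw [piecewise_eq_of_notMem _ _ _ (mem_sdiff.1 hi).2]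

theorem weight_mul_sum_chi_mul_chi (hp0 : 0 < p) (hp1 : p < 1) (x y : Fin n → Bool) :
    weight p y * ∑ S, chi p S y * chi p S x = if y = x then 1 else 0 := by
  have hσ : √(p * (1 - p)) ^ 2 = p * (1 - p) :=
    Real.sq_sqrt (mul_nonneg hp0.le (sub_nonneg.2 hp1.le))
  have hq : 1 - p ≠ 0 := (sub_pos.2 hp1).ne'
  have hcoord (a b : Bool) : (if a then p else 1 - p) *
      (1 + ((if a then 1 else 0) - p) / √(p * (1 - p)) *
        (((if b then 1 else 0) - p) / √(p * (1 - p)))) = if a = b then 1 else 0 := by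
    rw [div_mul_div_comm, ← sq, hσ]
    cases a <;> cases b <;>
      simp only [if_true, if_false, Bool.false_eq_true, Bool.true_eq_false] <;> field_simp <;> ring
  have hsum : ∑ S, chi p S y * chi p S x =
      ∏ i, (1 + ((if y i then 1 else 0) - p) / √(p * (1 - p)) *
        (((if x i then 1 else 0) - p) / √(p * (1 - p)))) := by
    simp only [prod_one_add, powerset_univ, chi, prod_mul_distrib]
  rw [hsum, weight, ← prod_mul_distrib]
  simp only [hcoord, prod_ite_zero, prod_const_one, mem_univ, true_imp_iff, funext_iff]

theorem sum_coeff_mul_chi (hp0 : 0 < p) (hp1 : p < 1) (f : (Fin n → Bool) → ℝ)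
    (x : Fin n → Bool) : ∑ S, coeff p f S * chi p S x = f x := by
  calc ∑ S, coeff p f S * chi p S x
      = Ep p (fun y => ∑ S, f y * chi p S y * chi p S x) := by
        simp only [coeff, ← Ep_mul_const, ← Ep_sum]
    _ = ∑ y, f y * (weight p y * ∑ S, chi p S y * chi p S x) := by
        simp only [Ep_eq_sum_weight_mul, mul_assoc, ← mul_sum, mul_left_comm]
    _ = f x := by simp only [weight_mul_sum_chi_mul_chi hp0 hp1, mul_ite, mul_one, mul_zero,
        sum_ite_eq', mem_univ, if_true]

theorem sum_coeff_sq (hp0 : 0 < p) (hp1 : p < 1) (f : (Fin n → Bool) → ℝ) :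
    ∑ S, coeff p f S ^ 2 = Ep p fun x => f x ^ 2 := by
  calc ∑ S, coeff p f S ^ 2
      = Ep p (fun x => ∑ S, coeff p f S * (f x * chi p S x)) := by
        simp only [Ep_sum, Ep_const_mul, sq, coeff]
    _ = Ep p (fun x => f x * ∑ S, coeff p f S * chi p S x) := by
        simp only [mul_sum, mul_left_comm]
    _ = Ep p fun x => f x ^ 2 := by simp only [sum_coeff_mul_chi hp0 hp1, sq]

end Fourier

section Fiber

variable {p : ℝ} {S : Finset (Fin n)} {f : (Fin n → Bool) → ℝ}

/-- The coefficient at `S` of the function of the coordinates in `S` obtained from `f` by fixing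
the others to those of `x`. For `0 < p < 1` it is the derivative `D_S f(x)`, written as an average;
all of the point `y` is sampled, but only its coordinates in `S` matter. -/
noncomputable def fiberCoeff (p : ℝ) (S : Finset (Fin n)) (f : (Fin n → Bool) → ℝ)
    (x : Fin n → Bool) : ℝ :=
  Ep p fun y => f (S.piecewise y x) * chi p S y

/-- The increment `f_{S→1} - f_{S→0}` of `f` when all coordinates in `S` are raised from `0` to
`1`, as a function of a full point whose coordinates in `S` are ignored. -/
def increment (S : Finset (Fin n)) (f : (Fin n → Bool) → ℝ) (x : Fin n → Bool) : ℝ :=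
  f (S.piecewise ⊤ x) - f (S.piecewise ⊥ x)

theorem restrict1_eq_piecewise : restrict1 S f = fun x => f (S.piecewise ⊤ x) :=
  rfl

theorem coeff_fiberCoeff_sdiff {T : Finset (Fin n)} (hST : S ⊆ T) :
    coeff p (fiberCoeff p S f) (T \ S) = coeff p f T := by
  unfold coeff fiberCoeff
  rw [← Ep_Ep_piecewise S fun x => f x * chi p T x]
  simp only [chi_piecewise hST, ← mul_assoc, Ep_mul_const]

theorem genInf_le_Ep_fiberCoeff_sq (hp0 : 0 < p) (hp1 : p < 1) (S : Finset (Fin n))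
    (f : (Fin n → Bool) → ℝ) :
    genInf p S f ≤ (Ep p fun x => fiberCoeff p S f x ^ 2) / (p * (1 - p)) ^ S.card := by
  have : 0 ≤ p * (1 - p) := mul_nonneg hp0.le (sub_nonneg.2 hp1.le)
  have hinj : Set.InjOn (· \ S) (univ.filter (S ⊆ ·) : Finset (Finset (Fin n))) := by
    intro T hT U hU hTU
    rw [← sdiff_union_of_subset (mem_filter.1 hT).2, ← sdiff_union_of_subset (mem_filter.1 hU).2]
    exact congrArg (· ∪ S) hTU
  unfold genInf
  gcongr
  calc ∑ T ∈ univ.filter (S ⊆ ·), coeff p f T ^ 2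
      = ∑ T ∈ univ.filter (S ⊆ ·), coeff p (fiberCoeff p S f) (T \ S) ^ 2 :=
        sum_congr rfl fun T hT => by rw [coeff_fiberCoeff_sdiff (mem_filter.1 hT).2]
    _ = ∑ U ∈ (univ.filter (S ⊆ ·)).image (· \ S), coeff p (fiberCoeff p S f) U ^ 2 :=
        (sum_image (f := fun U => coeff p (fiberCoeff p S f) U ^ 2) hinj).symm
    _ ≤ ∑ U, coeff p (fiberCoeff p S f) U ^ 2 :=
        sum_le_univ_sum_of_nonneg fun U => sq_nonneg _
    _ = Ep p fun x => fiberCoeff p S f x ^ 2 := sum_coeff_sq hp0 hp1 _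

theorem fiberCoeff_eq_Ep_sub_mul_chi (hS : S.Nonempty) (x : Fin n → Bool) (c : ℝ) :
    fiberCoeff p S f x = Ep p fun y => (f (S.piecewise y x) - c) * chi p S y := by
  simp only [sub_mul, Ep_sub, Ep_const_mul, Ep_chi hS, mul_zero, sub_zero, fiberCoeff]

theorem increment_nonneg (hf : Monotone f) (x : Fin n → Bool) : 0 ≤ increment S f x :=
  sub_nonneg.2 (hf (piecewise_le_piecewise S bot_le le_rfl))

theorem abs_fiberCoeff_le (hp0 : 0 ≤ p) (hp1 : p ≤ 1) (hf : Monotone f) (hS : S.Nonempty)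
    (x : Fin n → Bool) :
    |fiberCoeff p S f x| ≤ (2 * √(p * (1 - p))) ^ S.card * increment S f x := by
  have hterm (y : Fin n → Bool) :
      |(f (S.piecewise y x) - f (S.piecewise ⊥ x)) * chi p S y| ≤
        |chi p S y| * increment S f x := by
    have hbot : f (S.piecewise ⊥ x) ≤ f (S.piecewise y x) :=
      hf (piecewise_le_piecewise S bot_le le_rfl)
    have htop : f (S.piecewise y x) ≤ f (S.piecewise ⊤ x) :=
      hf (piecewise_le_piecewise S le_top le_rfl)
    rw [abs_mul, mul_comm, abs_of_nonneg (sub_nonneg.2 hbot)]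
    exact mul_le_mul_of_nonneg_left (sub_le_sub_right htop _) (abs_nonneg _)
  calc |fiberCoeff p S f x|
      ≤ Ep p fun y => |(f (S.piecewise y x) - f (S.piecewise ⊥ x)) * chi p S y| := by
        rw [fiberCoeff_eq_Ep_sub_mul_chi hS x (f (S.piecewise ⊥ x))]
        exact abs_Ep_le hp0 hp1 _
    _ ≤ Ep p fun y => |chi p S y| * increment S f x := Ep_mono hp0 hp1 hterm
    _ = (2 * √(p * (1 - p))) ^ S.card * increment S f x := by
        rw [Ep_mul_const, Ep_abs_chi hp0 hp1]

theorem genInf_le_Ep_increment_sq (hp0 : 0 < p) (hp1 : p < 1) (hf : Monotone f)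
    (hS : S.Nonempty) : genInf p S f ≤ 4 ^ S.card * Ep p fun x => increment S f x ^ 2 := by
  have hσ : 0 < p * (1 - p) := mul_pos hp0 (sub_pos.2 hp1)
  have hsq (x : Fin n → Bool) :
      fiberCoeff p S f x ^ 2 ≤ (4 * (p * (1 - p))) ^ S.card * increment S f x ^ 2 := by
    calc fiberCoeff p S f x ^ 2
        ≤ ((2 * √(p * (1 - p))) ^ S.card * increment S f x) ^ 2 :=
          sq_le_sq' (neg_le_of_abs_le (abs_fiberCoeff_le hp0.le hp1.le hf hS x))
            (le_of_abs_le (abs_fiberCoeff_le hp0.le hp1.le hf hS x))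
      _ = (4 * (p * (1 - p))) ^ S.card * increment S f x ^ 2 := by
          rw [mul_pow, pow_right_comm, mul_pow, Real.sq_sqrt hσ.le]
          norm_num
  calc genInf p S f
      ≤ (Ep p fun x => fiberCoeff p S f x ^ 2) / (p * (1 - p)) ^ S.card :=
        genInf_le_Ep_fiberCoeff_sq hp0 hp1 S f
    _ ≤ (Ep p fun x => (4 * (p * (1 - p))) ^ S.card * increment S f x ^ 2) /
          (p * (1 - p)) ^ S.card := by
        gcongr
        exact Ep_mono hp0.le hp1.le hsq
    _ = 4 ^ S.card * Ep p fun x => increment S f x ^ 2 := by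
        rw [Ep_const_mul, mul_pow]
        field_simp

theorem one_sub_pow_card_mul_Ep_increment_le (hp0 : 0 ≤ p) (hp1 : p ≤ 1) (hf : Monotone f)
    (S : Finset (Fin n)) :
    (1 - p) ^ S.card * Ep p (increment S f) ≤ Ep p (restrict1 S f) - Ep p f := by
  let zeroOn (y : Fin n → Bool) : ℝ := ∏ i ∈ S, if y i then 0 else 1
  have hzeroOn : Ep p zeroOn = (1 - p) ^ S.card := by
    simpa using Ep_prod (p := p) S fun _ b => if b then 0 else 1
  have hpoint (x y : Fin n → Bool) :
      zeroOn y * increment S f x ≤ f (S.piecewise ⊤ x) - f (S.piecewise y x) := by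
    by_cases hy : ∀ i ∈ S, y i = false
    · have hpiecewise : S.piecewise y x = S.piecewise ⊥ x :=
        S.piecewise_congr hy fun _ _ => rfl
      have hone : zeroOn y = 1 := prod_eq_one fun i hi => by simp [hy i hi]
      rw [hone, one_mul, hpiecewise, increment]
    · push Not at hy
      obtain ⟨i, hi, hyi⟩ := hy
      have hzero : zeroOn y = 0 := prod_eq_zero hi (by simpa using hyi)
      rw [hzero, zero_mul]
      exact sub_nonneg.2 (hf (piecewise_le_piecewise S le_top le_rfl))
  calc (1 - p) ^ S.card * Ep p (increment S f)
      = Ep p (fun x => Ep p fun y => zeroOn y * increment S f x) := by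
        simp only [Ep_mul_const, Ep_const_mul, hzeroOn]
    _ ≤ Ep p (fun x => Ep p fun y => f (S.piecewise ⊤ x) - f (S.piecewise y x)) :=
        Ep_mono hp0 hp1 fun x => Ep_mono hp0 hp1 (hpoint x)
    _ = Ep p (restrict1 S f) - Ep p f := by
        simp only [Ep_sub, Ep_const, Ep_Ep_piecewise, restrict1_eq_piecewise]

theorem genInf_le_mul_Ep_restrict1_sub (hp0 : 0 < p) (hp1 : p < 1)
    (hf01 : ∀ x, f x ∈ Set.Icc 0 1) (hf : Monotone f) (hS : S.Nonempty) :
    genInf p S f ≤ (4 / (1 - p)) ^ S.card * (Ep p (restrict1 S f) - Ep p f) := by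
  have hq : 0 < 1 - p := sub_pos.2 hp1
  have hsq (x : Fin n → Bool) : increment S f x ^ 2 ≤ increment S f x :=
    pow_le_of_le_one (increment_nonneg hf x)
      ((sub_le_self _ (hf01 _).1).trans (hf01 _).2) two_ne_zero
  calc genInf p S f ≤ 4 ^ S.card * Ep p fun x => increment S f x ^ 2 :=
        genInf_le_Ep_increment_sq hp0 hp1 hf hS
    _ ≤ 4 ^ S.card * Ep p (increment S f) := by
        gcongr
        exact Ep_mono hp0.le hp1.le hsq
    _ = (4 / (1 - p)) ^ S.card * ((1 - p) ^ S.card * Ep p (increment S f)) := by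
        rw [div_pow]
        field_simp
    _ ≤ (4 / (1 - p)) ^ S.card * (Ep p (restrict1 S f) - Ep p f) := by
        gcongr
        exact one_sub_pow_card_mul_Ep_increment_le hp0.le hp1.le hf S

end Fiber

theorem statement5_general {n : ℕ} {p r δ : ℝ} (hp0 : 0 < p) (hp1 : p < 1)
    {f : (Fin n → Bool) → ℝ} (hf01 : ∀ x, f x ∈ Set.Icc 0 1) (hmono : Mono f)
    (hglob : IsGlobal p r δ f) {S : Finset (Fin n)} (hS : S.Nonempty) (hSr : S.card ≤ r) :
    genInf p S f ≤ (4 / (1 - p)) ^ S.card * δ := by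
  have : 0 < 1 - p := sub_pos.2 hp1
  refine (genInf_le_mul_Ep_restrict1_sub hp0 hp1 hf01 (fun x y => hmono x y) hS).trans ?_
  gcongr
  exact sub_le_iff_le_add'.2 (hglob S hSr)

/-- monotone global Boolean functions have small generalised influences. -/
theorem statement5 {n : ℕ} (p δ : ℝ) (r : ℕ) (hp : 0 < p) (hp' : p ≤ 1/2)
    (hr : 1 ≤ r) (hδ : 0 < δ)
    (f : (Fin n → Bool) → ℝ) (hbool : ∀ x, f x = 0 ∨ f x = 1)
    (hmono : Mono f) (hglob : IsGlobal p (r : ℝ) δ f) :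
    ∀ S : Finset (Fin n), S.Nonempty → S.card ≤ r → genInf p S f ≤ 8 ^ r * δ := by
  intro S hS hSr
  have hf01 (x : Fin n → Bool) : f x ∈ Set.Icc 0 1 := by rcases hbool x with h | h <;> simp [h]
  have hq : 0 < 1 - p := by linarith
  have hbase : 4 / (1 - p) ≤ 8 := by rw [div_le_iff₀ hq]; linarith
  calc genInf p S f ≤ (4 / (1 - p)) ^ S.card * δ :=
        statement5_general hp (by linarith) hf01 hmono hglob hS (by exact_mod_cast hSr)
    _ ≤ 8 ^ S.card * δ := by gcongr
    _ ≤ 8 ^ r * δ := by gcongr; norm_num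

end GlobalHC
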